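/- arXiv:1112.2427 — 5 statements merged into one kernel-verified Lean document; each statement's English description precedes it below -/
import Mathlib

section
/- Let K be a field of characteristic p > 0 and let f ∈ m = (x_1,…,x_m) ⊆ K[x_1,…,x_m] be a nonzero polynomial vanishing at the origin. Suppose the sequence e ↦ ν_f(p^e)/p^e converges to a real number c with 0 < c ≤ 1 (i.e., c = fpt(f)). Then for every integer e ≥ 1, ν_f(p^e) = p^e·⟨c⟩_e = ⌈p^e c⌉ − 1, where ⟨c⟩_e denotes the e-th truncation of c in base p. -/
/-!
Write `ν(q) = nu f q`. For `q = p ^ e` the claim is equivalent to `ν(q) / q < c ≤ (ν(q) + 1) / q`.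

The upper bound holds because `(ν(q) + 1) / q` does not increase along powers of `p`: if
`f ^ l ∈ m^[q]` then `f ^ (l * Q) ∈ m^[q * Q]` for `Q = p ^ s`.

The lower bound needs a strict gain, which comes from `pow_mul_notMem_frobeniusPower`: if
`g ∉ m^[q]` and `h ≠ 0` has all exponents less than `Q = p ^ s`, then `g ^ Q * h ∉ m^[q * Q]`.
The exponents of `g ^ Q` are the `Q • a` with `a` an exponent of `g`, so by uniqueness of division
with remainder by `Q` no cancellation occurs in the product, and the coefficient of `g ^ Q * h` at
`Q • a + d` is `g_a ^ Q * h_d`. With `h = 1` this gives monotonicity of `ν(q) / q` along powers of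
`p`; with `h = f` and `p ^ s` larger than the degree of `f` it gives
`ν(q * p ^ s) ≥ ν(q) * p ^ s + 1`, hence `c ≥ (ν(q) * p ^ s + 1) / (q * p ^ s) > ν(q) / q`.
-/

/-- The `q`-th Frobenius power `m^[q]` of the maximal ideal generated by the variables. -/
noncomputable def frobeniusPower (K : Type*) [CommRing K] (σ : Type*) (q : ℕ) :
    Ideal (MvPolynomial σ K) :=
  Ideal.span (Set.range fun i : σ => (MvPolynomial.X i : MvPolynomial σ K) ^ q)

/-- `ν_f(q) = max { l : f ^ l ∉ m^[q] }`. -/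
noncomputable def nu {K : Type*} [CommRing K] {σ : Type*} (f : MvPolynomial σ K) (q : ℕ) : ℕ :=
  sSup {l : ℕ | f ^ l ∉ frobeniusPower K σ q}


/-- The `e`-th truncation of `α ∈ (0,1]` in base `p`; by convention `⟨0⟩ₑ = 0`. -/
noncomputable def trunc (p e : ℕ) (α : ℝ) : ℝ :=
  if α = 0 then 0 else (⌈(p : ℝ) ^ e * α⌉ - 1) / (p : ℝ) ^ e

open MvPolynomial in
/-- `m^[q]` is a monomial ideal: its members are the polynomials each of whose exponents has some
coordinate at least `q`. -/
lemma mem_frobeniusPower_iff {K σ : Type*} [CommRing K] (q : ℕ) (g : MvPolynomial σ K) :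
    g ∈ frobeniusPower K σ q ↔ ∀ a ∈ g.support, ∃ i, q ≤ a i := by
  have h : (Set.range fun i : σ => (X i : MvPolynomial σ K) ^ q) =
      (fun s => monomial s (1 : K)) '' (Set.range fun i : σ => Finsupp.single i q) := by
    ext x
    simp [X_pow_eq_monomial]
  rw [frobeniusPower, h, mem_ideal_span_monomial_image]
  simp

section Frobenius

variable {K σ : Type*} [Field K] (p : ℕ) [Fact p.Prime] [CharP K p]

open MvPolynomial

lemma coeff_pow_smul (g : MvPolynomial σ K) (s : ℕ) (a : σ →₀ ℕ) :
    (g ^ p ^ s).coeff (p ^ s • a) = g.coeff a ^ p ^ s := by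
  have hp : p ^ s ≠ 0 := pow_ne_zero _ (Fact.out : p.Prime).ne_zero
  rw [← map_iterateFrobenius_expand p g s, coeff_map, coeff_expand_smul _ hp, iterateFrobenius_def]

lemma exists_of_mem_support_pow (g : MvPolynomial σ K) (s : ℕ) (u : σ →₀ ℕ)
    (hu : u ∈ (g ^ p ^ s).support) : ∃ a ∈ g.support, u = p ^ s • a := by
  classical
  rw [← map_iterateFrobenius_expand p g s] at hu
  have := support_expand_subset _ (support_map_subset _ _ hu)
  obtain ⟨a, ha, rfl⟩ := Finset.mem_image.mp this
  exact ⟨a, ha, rfl⟩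

lemma pow_mem_frobeniusPower {q : ℕ} (s : ℕ) {g : MvPolynomial σ K}
    (hg : g ∈ frobeniusPower K σ q) : g ^ p ^ s ∈ frobeniusPower K σ (q * p ^ s) := by
  rw [mem_frobeniusPower_iff] at hg ⊢
  intro u hu
  obtain ⟨a, ha, rfl⟩ := exists_of_mem_support_pow p g s u hu
  obtain ⟨i, hi⟩ := hg a ha
  refine ⟨i, ?_⟩
  simpa [mul_comm] using Nat.mul_le_mul_right (p ^ s) hi

/-- Multiplying a `p ^ s`-th power by a polynomial with exponents below `p ^ s` creates no
cancellation. -/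
lemma coeff_pow_mul (g h : MvPolynomial σ K) (s : ℕ)
    (hh : ∀ d ∈ h.support, ∀ i, d i < p ^ s) (a d : σ →₀ ℕ) (hd : d ∈ h.support) :
    (g ^ p ^ s * h).coeff (p ^ s • a + d) = g.coeff a ^ p ^ s * h.coeff d := by
  classical
  rw [coeff_mul, Finset.sum_eq_single (p ^ s • a, d), coeff_pow_smul]
  · rintro ⟨u, v⟩ huv hne
    by_contra hc
    obtain ⟨b, -, rfl⟩ := exists_of_mem_support_pow p g s u
      (mem_support_iff.mpr (left_ne_zero_of_mul hc))
    have hv : v ∈ h.support := mem_support_iff.mpr (right_ne_zero_of_mul hc)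
    rw [Finset.HasAntidiagonal.mem_antidiagonal] at huv
    have key : v = d := by
      ext i
      have h1 := congrArg (fun w : σ →₀ ℕ => w i % p ^ s) huv
      simpa [Nat.mul_add_mod, Nat.mod_eq_of_lt (hh v hv i), Nat.mod_eq_of_lt (hh d hd i)] using h1
    subst key
    exact hne (Prod.ext (add_right_cancel huv) rfl)
  · intro hn
    rw [Finset.HasAntidiagonal.mem_antidiagonal] at hn
    exact (hn rfl).elim

lemma pow_mul_notMem_frobeniusPower {q : ℕ} (s : ℕ) {g h : MvPolynomial σ K}
    (hg : g ∉ frobeniusPower K σ q) (h0 : h ≠ 0)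
    (hh : ∀ d ∈ h.support, ∀ i, d i < p ^ s) :
    g ^ p ^ s * h ∉ frobeniusPower K σ (q * p ^ s) := by
  rw [mem_frobeniusPower_iff] at hg ⊢
  push Not at hg ⊢
  obtain ⟨a, ha, hlt⟩ := hg
  obtain ⟨d, hd⟩ := support_nonempty.mpr h0
  refine ⟨p ^ s • a + d, ?_, fun i => ?_⟩
  · rw [mem_support_iff, coeff_pow_mul p g h s hh a d hd]
    exact mul_ne_zero (pow_ne_zero _ (mem_support_iff.mp ha)) (mem_support_iff.mp hd)
  · have h1 := hh d hd i
    have h2 : (a i + 1) * p ^ s ≤ q * p ^ s := Nat.mul_le_mul_right _ (hlt i)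
    simp only [Finsupp.add_apply, Finsupp.smul_apply, smul_eq_mul]
    linarith [mul_comm (p ^ s) (a i), add_mul (a i) 1 (p ^ s)]

/-- The supremum defining `nu` is attained: the set is nonempty, is closed downwards, and is bounded
since a power of `f` lies in `m^[q]`. -/
lemma pow_notMem_iff_le_nu {f : MvPolynomial σ K} (hfm : f ∈ Ideal.span (Set.range
      (X : σ → MvPolynomial σ K))) {q : ℕ} (hq : 0 < q) (l : ℕ) :
    f ^ l ∉ frobeniusPower K σ q ↔ l ≤ nu f q := by
  have hrad : f ∈ (frobeniusPower K σ q).radical := by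
    refine (Ideal.span_le.mpr ?_ : Ideal.span _ ≤ _) hfm
    rintro _ ⟨i, rfl⟩
    exact ⟨q, Ideal.subset_span ⟨i, rfl⟩⟩
  obtain ⟨N, hN⟩ := hrad
  have hbdd : BddAbove {l : ℕ | f ^ l ∉ frobeniusPower K σ q} :=
    ⟨N, fun l hl => not_lt.mp fun hlt => hl (Ideal.pow_mem_of_pow_mem _ hN hlt.le)⟩
  have h0 : (0 : ℕ) ∈ {l : ℕ | f ^ l ∉ frobeniusPower K σ q} := by
    rw [Set.mem_ofPred_eq, pow_zero, mem_frobeniusPower_iff]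
    push Not
    exact ⟨0, by simp, fun i => by simpa using hq⟩
  refine ⟨fun hl => le_csSup hbdd hl, fun hl hmem => ?_⟩
  exact Nat.sSup_mem ⟨0, h0⟩ hbdd (Ideal.pow_mem_of_pow_mem _ hmem hl)

end Frobenius

theorem stmt_5 {K : Type*} [Field K] (p : ℕ) [Fact p.Prime] [CharP K p]
    {m : ℕ} (f : MvPolynomial (Fin m) K) (hf0 : f ≠ 0)
    (hfm : f ∈ Ideal.span (Set.range (MvPolynomial.X : Fin m → MvPolynomial (Fin m) K)))
    (c : ℝ) (hc0 : 0 < c) (hc1 : c ≤ 1)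
    (hconv : Filter.Tendsto (fun e : ℕ => (nu f (p ^ e) : ℝ) / (p : ℝ) ^ e)
      Filter.atTop (nhds c)) :
    ∀ e : ℕ, 1 ≤ e →
      (nu f (p ^ e) : ℝ) = (p : ℝ) ^ e * trunc p e c ∧
      (nu f (p ^ e) : ℝ) = ⌈(p : ℝ) ^ e * c⌉ - 1 := by
  intro e _
  have hp : p.Prime := Fact.out
  have hpR : (0 : ℝ) < p := by exact_mod_cast hp.pos
  have hqe : (0 : ℝ) < (p : ℝ) ^ e := by positivity
  have hnu (e l : ℕ) := pow_notMem_iff_le_nu hfm (pow_pos hp.pos e) l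
  have htop : f ^ nu f (p ^ e) ∉ frobeniusPower K (Fin m) (p ^ e) := (hnu e _).mpr le_rfl
  have hmono (e s : ℕ) : nu f (p ^ e) * p ^ s ≤ nu f (p ^ (e + s)) := by
    rw [← hnu, pow_add, pow_mul]
    simpa using pow_mul_notMem_frobeniusPower p s ((hnu e _).mpr le_rfl) one_ne_zero
      (fun d hd i => by
        have : d = 0 := by
          by_contra hne
          exact MvPolynomial.mem_support_iff.mp hd (by
            rw [MvPolynomial.coeff_one, if_neg (Ne.symm hne)])
        simp [this, hp.pos])
  have hupper (s : ℕ) : nu f (p ^ (e + s)) < (nu f (p ^ e) + 1) * p ^ s := by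
    rw [← not_le, ← hnu, not_not, pow_add, pow_mul]
    refine pow_mem_frobeniusPower p s ?_
    by_contra hcon
    exact absurd ((hnu e _).mp hcon) (by lia)
  -- the choice `s = f.totalDegree` works since `s < p ^ s`
  obtain ⟨s, hs⟩ : ∃ s, nu f (p ^ e) * p ^ s + 1 ≤ nu f (p ^ (e + s)) := by
    refine ⟨f.totalDegree, ?_⟩
    rw [← hnu, pow_add, pow_add, pow_mul, pow_one]
    exact pow_mul_notMem_frobeniusPower p _ htop hf0 fun d hd i =>
      ((MvPolynomial.monomial_le_degreeOf i hd).trans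
        (MvPolynomial.degreeOf_le_totalDegree f i)).trans_lt (Nat.lt_pow_self hp.one_lt)
  have hlow (e : ℕ) : (nu f (p ^ e) : ℝ) / (p : ℝ) ^ e ≤ c := by
    refine ge_of_tendsto hconv ?_
    filter_upwards [Filter.eventually_ge_atTop e] with n hn
    obtain ⟨t, rfl⟩ := Nat.exists_eq_add_of_le hn
    rw [div_le_div_iff₀ (by positivity) (by positivity), pow_add (p : ℝ)]
    have : (nu f (p ^ e) * p ^ t : ℝ) ≤ nu f (p ^ (e + t)) := by exact_mod_cast hmono e t
    nlinarith [pow_pos hpR e]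
  have hhigh : c ≤ ((nu f (p ^ e) : ℝ) + 1) / (p : ℝ) ^ e := by
    refine le_of_tendsto hconv ?_
    filter_upwards [Filter.eventually_ge_atTop e] with n hn
    obtain ⟨t, rfl⟩ := Nat.exists_eq_add_of_le hn
    rw [div_le_div_iff₀ (by positivity) (by positivity), pow_add (p : ℝ)]
    have : (nu f (p ^ (e + t)) : ℝ) ≤ (nu f (p ^ e) + 1) * p ^ t := by
      exact_mod_cast (hupper t).le
    nlinarith [pow_pos hpR e]
  have hstrict : (nu f (p ^ e) : ℝ) < (p : ℝ) ^ e * c := by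
    have h1 := hlow (e + s)
    rw [div_le_iff₀ (by positivity), pow_add (p : ℝ)] at h1
    have h2 : (nu f (p ^ e) * p ^ s + 1 : ℝ) ≤ nu f (p ^ (e + s)) := by exact_mod_cast hs
    have hps : (0 : ℝ) < (p : ℝ) ^ s := by positivity
    refine lt_of_mul_lt_mul_right ?_ hps.le
    linarith [mul_comm c ((p : ℝ) ^ e * (p : ℝ) ^ s), mul_right_comm ((p : ℝ) ^ e) c ((p : ℝ) ^ s)]
  rw [le_div_iff₀ hqe] at hhigh
  have hceil : ⌈(p : ℝ) ^ e * c⌉ = (nu f (p ^ e) : ℤ) + 1 := by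
    rw [Int.ceil_eq_iff]
    push_cast
    constructor <;> linarith
  have hres : (nu f (p ^ e) : ℝ) = ⌈(p : ℝ) ^ e * c⌉ - 1 := by
    rw [hceil]
    push_cast
    ring
  refine ⟨?_, hres⟩
  rw [trunc, if_neg hc0.ne', mul_div_cancel₀ _ hqe.ne']
  exact hres
end

section
/- Fix a prime p and an integer d ≥ 1. Let a, b ∈ ℕ^m with a ≠ b and a_i + b_i ≥ 1 for every i, suppose the splitting polytope P has a unique maximal point η = (η_1, η_2), and let δ ≥ 0 be a real number. Then there exists γ = (γ_1, γ_2) ∈ P°_lower with γ_2 ≥ ⟨η_2⟩_d + 1/p^d and γ_1 + γ_2 = ⟨η_1⟩_d + ⟨η_2⟩_d + 1/p^d + δ if and only if the point (⟨η_1⟩_d + δ, ⟨η_2⟩_d + 1/p^d) lies in P°_lower. -/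
/-!
The point `Q = (⟨η₁⟩ + δ, ⟨η₂⟩ + 1/p^d)` is itself a witness for the existence statement. Conversely,
a witness `γ` lies on the antidiagonal through `Q`, at or above `Q`. Sliding from `γ` down to `Q`
does not increase the constraint `aᵢ s₁ + bᵢ s₂` when `aᵢ ≤ bᵢ`. When `bᵢ < aᵢ`, `Q` is compared
with `η` instead: a point of the lower interior has coordinate sum strictly below the maximum
(`sum_lt_of_mem_lowerInterior`), and `Q₂ ≥ η₂` (`le_trunc_add`), so `Q₁ < η₁`; as
`aᵢ s₁ + bᵢ s₂ = bᵢ (s₁ + s₂) + (aᵢ - bᵢ) s₁`, the constraint at `Q` is strictly smaller than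
at `η`, where it is at most `1`.
-/

/-- The splitting polytope of the pair of exponent vectors `a, b : Fin m → ℕ`. -/
def splittingPolytope {m : ℕ} (a b : Fin m → ℕ) : Set (ℝ × ℝ) :=
  {s | 0 ≤ s.1 ∧ 0 ≤ s.2 ∧ ∀ i, (a i : ℝ) * s.1 + (b i : ℝ) * s.2 ≤ 1}

/-- The lower interior of the splitting polytope. -/
def lowerInterior {m : ℕ} (a b : Fin m → ℕ) : Set (ℝ × ℝ) :=
  {s | 0 ≤ s.1 ∧ 0 ≤ s.2 ∧ ∀ i, (a i : ℝ) * s.1 + (b i : ℝ) * s.2 < 1}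

/-- `η` is a maximal point of the splitting polytope: it maximizes the coordinate sum. -/
def isMaxPoint {m : ℕ} (a b : Fin m → ℕ) (η : ℝ × ℝ) : Prop :=
  η ∈ splittingPolytope a b ∧ ∀ s ∈ splittingPolytope a b, s.1 + s.2 ≤ η.1 + η.2


/-- A point of the lower interior can be pushed in the direction `(1, 1)` without leaving the
polytope, so its coordinate sum is not maximal. -/
lemma sum_lt_of_mem_lowerInterior {m : ℕ} {a b : Fin m → ℕ} {η γ : ℝ × ℝ}
    (hη : isMaxPoint a b η) (hγ : γ ∈ lowerInterior a b) : γ.1 + γ.2 < η.1 + η.2 := by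
  obtain ⟨h1, h2, h⟩ := hγ
  have key : ∀ᶠ ε in nhdsWithin (0 : ℝ) (Set.Ioi 0),
      ∀ i, (a i : ℝ) * (γ.1 + ε) + (b i : ℝ) * (γ.2 + ε) < 1 := by
    refine Filter.eventually_all.2 fun i => ?_
    have hc : Continuous fun ε : ℝ => (a i : ℝ) * (γ.1 + ε) + (b i : ℝ) * (γ.2 + ε) := by
      fun_prop
    exact (hc.continuousAt.eventually_lt continuousAt_const (by simpa using h i)).filter_mono
      nhdsWithin_le_nhds
  obtain ⟨ε, hε, hpos⟩ := (key.and self_mem_nhdsWithin).exists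
  have hpos' : 0 < ε := hpos
  have := hη.2 (γ.1 + ε, γ.2 + ε)
    ⟨by dsimp only; linarith, by dsimp only; linarith, fun i => (hε i).le⟩
  dsimp only at this
  linarith

lemma trunc_nonneg {p d : ℕ} (hp : 0 < p) {α : ℝ} (hα : 0 ≤ α) : 0 ≤ trunc p d α := by
  unfold trunc
  split_ifs with h
  · exact le_rfl
  · have hq : (0 : ℝ) < (p : ℝ) ^ d := by positivity
    have hα' : 0 < α := lt_of_le_of_ne hα (Ne.symm h)
    have hc : (1 : ℤ) ≤ ⌈(p : ℝ) ^ d * α⌉ := Int.ceil_pos.2 (mul_pos hq hα')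
    have hc' : (1 : ℝ) ≤ (⌈(p : ℝ) ^ d * α⌉ : ℝ) := by exact_mod_cast hc
    exact div_nonneg (by linarith) hq.le

lemma le_trunc_add {p d : ℕ} (hp : 0 < p) (α : ℝ) :
    α ≤ trunc p d α + 1 / (p : ℝ) ^ d := by
  have hq : (0 : ℝ) < (p : ℝ) ^ d := by positivity
  unfold trunc
  split_ifs with h
  · rw [h]; positivity
  · rw [← add_div, le_div_iff₀ hq]
    have := Int.le_ceil ((p : ℝ) ^ d * α)
    linarith

theorem stmt_9 (p : ℕ) (hp : p.Prime) (d : ℕ) (hd : 1 ≤ d)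
    {m : ℕ} (a b : Fin m → ℕ) (hab : a ≠ b) (hvar : ∀ i, 1 ≤ a i + b i)
    (η : ℝ × ℝ) (hη : isMaxPoint a b η) (huniq : ∀ s, isMaxPoint a b s → s = η)
    (δ : ℝ) (hδ : 0 ≤ δ) :
    (∃ γ : ℝ × ℝ, γ ∈ lowerInterior a b ∧ trunc p d η.2 + 1 / (p : ℝ) ^ d ≤ γ.2 ∧
        γ.1 + γ.2 = trunc p d η.1 + trunc p d η.2 + 1 / (p : ℝ) ^ d + δ) ↔
      (trunc p d η.1 + δ, trunc p d η.2 + 1 / (p : ℝ) ^ d) ∈ lowerInterior a b := by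
  constructor
  · rintro ⟨γ, hγ, hγ2, hsum⟩
    have hlt := sum_lt_of_mem_lowerInterior hη hγ
    have ht1 := trunc_nonneg (d := d) hp.pos hη.1.1
    have hle := le_trunc_add (d := d) hp.pos η.2
    have hη2 := hη.1.2.1
    generalize trunc p d η.1 = t at *
    rw [add_assoc t] at hsum
    generalize trunc p d η.2 + 1 / (p : ℝ) ^ d = q at *
    refine ⟨by dsimp only; linarith, by dsimp only; linarith, fun i => ?_⟩
    dsimp only
    have hb : (0 : ℝ) ≤ b i := Nat.cast_nonneg _
    have hγi := hγ.2.2 i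
    have hηi := hη.1.2.2 i
    rcases le_or_gt (a i : ℝ) (b i) with hi | hi
    · have hγ1 : γ.1 = t + δ + q - γ.2 := by linarith
      rw [hγ1] at hγi
      nlinarith [mul_nonneg (sub_nonneg.2 hi) (sub_nonneg.2 hγ2)]
    · have hQ1 : t + δ < η.1 := by linarith
      have hS : t + δ + q ≤ η.1 + η.2 := by linarith
      nlinarith [mul_nonneg hb (sub_nonneg.2 hS), mul_pos (sub_pos.2 hi) (sub_pos.2 hQ1)]
  · intro h
    exact ⟨_, h, le_rfl, by dsimp only; ring⟩
end

section
/- Let a, b ∈ ℕ^m with a ≠ b and a_i + b_i ≥ 1 for every i, and suppose the splitting polytope P has a unique maximal point η = (η_1, η_2) with η_1 + η_2 > 1. Then, after possibly exchanging the roles of a and b, the splitting matrix E contains a row equal to (1, 0) and a row equal to (0, n) for some integer n ≥ 1; that is, either there exist indices i, j with (a_j, b_j) = (1,0) and (a_i, b_i) = (0,n) for some n ≥ 1, or there exist indices i, j with (a_j, b_j) = (0,1) and (a_i, b_i) = (n,0) for some n ≥ 1. -/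
theorem stmt_10 {m : ℕ} (a b : Fin m → ℕ) (hab : a ≠ b) (hvar : ∀ i, 1 ≤ a i + b i)
    (η : ℝ × ℝ) (hη : isMaxPoint a b η) (huniq : ∀ s, isMaxPoint a b s → s = η)
    (hsum : 1 < η.1 + η.2) :
    ((∃ j, a j = 1 ∧ b j = 0) ∧ ∃ i n, 1 ≤ n ∧ a i = 0 ∧ b i = n) ∨
    ((∃ j, a j = 0 ∧ b j = 1) ∧ ∃ i n, 1 ≤ n ∧ a i = n ∧ b i = 0) := by
  obtain ⟨⟨h1, h2, hP⟩, hmax⟩ := hη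
  have hrow : ∀ i, a i = 0 ∨ b i = 0 := by
    intro i
    by_contra! h
    have ha : (1 : ℝ) ≤ a i := by exact_mod_cast Nat.one_le_iff_ne_zero.mpr h.1
    have hb : (1 : ℝ) ≤ b i := by exact_mod_cast Nat.one_le_iff_ne_zero.mpr h.2
    nlinarith [hP i, mul_nonneg (sub_nonneg.mpr ha) h1, mul_nonneg (sub_nonneg.mpr hb) h2]
  obtain ⟨i, hi⟩ : ∃ i, a i ≠ 0 := by
    by_contra! h
    have := hmax (η.1 + 1, η.2) ⟨by dsimp only; linarith, h2, fun i => by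
      simpa [h i] using hP i⟩
    dsimp only at this
    linarith
  obtain ⟨k, hk⟩ : ∃ k, b k ≠ 0 := by
    by_contra! h
    have := hmax (η.1, η.2 + 1) ⟨h1, by dsimp only; linarith, fun i => by
      simpa [h i] using hP i⟩
    dsimp only at this
    linarith
  have hbi : b i = 0 := (hrow i).resolve_left hi
  have hak : a k = 0 := (hrow k).resolve_right hk
  by_cases hi1 : a i = 1
  · exact Or.inl ⟨⟨i, hi1, hbi⟩, k, b k, Nat.one_le_iff_ne_zero.mpr hk, hak, rfl⟩
  by_cases hk1 : b k = 1
  · exact Or.inr ⟨⟨k, hak, hk1⟩, i, a i, Nat.one_le_iff_ne_zero.mpr hi, rfl, hbi⟩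
  exfalso
  have ha : (2 : ℝ) ≤ a i := by exact_mod_cast (by omega : 2 ≤ a i)
  have hb : (2 : ℝ) ≤ b k := by exact_mod_cast (by omega : 2 ≤ b k)
  have e1 := hP i
  have e2 := hP k
  simp only [hbi, hak, Nat.cast_zero, zero_mul, add_zero, zero_add] at e1 e2
  nlinarith [mul_nonneg (sub_nonneg.mpr ha) h1, mul_nonneg (sub_nonneg.mpr hb) h2]
end

section
/- Let K be a field of characteristic p > 0, let a, b ∈ ℕ^m with a ≠ b and a_i + b_i ≥ 1 for every i, and let f = u_1 x^a + u_2 x^b with u_1, u_2 ∈ K nonzero. Fix e ≥ 1 and a real number α ≥ 0 with p^e·α ∈ ℕ. Then f^{p^e α} ∉ m^[p^e] if and only if there exists γ = (γ_1, γ_2) with p^e γ_1, p^e γ_2 ∈ ℕ, γ ∈ P°_lower, γ_1 + γ_2 = α, and the binomial coefficient C(p^e α, p^e γ_1) is nonzero modulo p. -/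
open MvPolynomial in
theorem not_mem_frobeniusPower_iff {K σ : Type*} [Field K] (q : ℕ) (g : MvPolynomial σ K) :
    g ∉ frobeniusPower K σ q ↔ ∃ d ∈ g.support, ∀ i, d i < q := by
  have h : frobeniusPower K σ q = Ideal.span ((fun s => monomial s (1 : K)) ''
      Set.range fun i : σ => Finsupp.single i q) := by
    rw [frobeniusPower, ← Set.range_comp]
    congr 2
    funext i
    simp [X_pow_eq_monomial]
  rw [h, mem_ideal_span_monomial_image]
  simp

/-- Exponents of different terms in the binomial expansion are different: this is the only use of
`a ≠ b`. -/
theorem binomial_exponent_injective {σ : Type*} {A B : σ →₀ ℕ} (hAB : A ≠ B) {j j' l l' : ℕ}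
    (hsum : j + l = j' + l') (h : j • A + l • B = j' • A + l' • B) : j = j' := by
  obtain ⟨i, hi⟩ := DFunLike.ne_iff.mp hAB
  have h1 := DFunLike.congr_fun h i
  simp only [Finsupp.add_apply, Finsupp.smul_apply, smul_eq_mul] at h1
  zify at h1 hsum hi ⊢
  have h2 : ((j : ℤ) - j') * (A i - B i) = 0 := by
    linear_combination h1 - B i * hsum
  rcases mul_eq_zero.mp h2 with h3 | h3
  · exact sub_eq_zero.mp h3
  · exact absurd (sub_eq_zero.mp h3) hi

open MvPolynomial in
/-- No cancellation: a term of the binomial expansion survives exactly when its binomial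
coefficient is nonzero in `K`. -/
theorem mem_support_binomial_pow {K σ : Type*} [Field K] (p : ℕ) [CharP K p]
    {A B : σ →₀ ℕ} (hAB : A ≠ B) {u1 u2 : K} (hu1 : u1 ≠ 0) (hu2 : u2 ≠ 0) (k : ℕ)
    (d : σ →₀ ℕ) :
    d ∈ ((monomial A u1 + monomial B u2) ^ k).support ↔
      ∃ k1 k2 : ℕ, k1 + k2 = k ∧ d = k1 • A + k2 • B ∧ ¬ p ∣ k.choose k1 := by
  classical
  have hexp : (monomial A u1 + monomial B u2) ^ k = ∑ x ∈ Finset.HasAntidiagonal.antidiagonal k,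
      monomial (x.1 • A + x.2 • B) ((k.choose x.1 : K) * (u1 ^ x.1 * u2 ^ x.2)) := by
    rw [(Commute.all _ _).add_pow']
    refine Finset.sum_congr rfl fun x _ => ?_
    rw [monomial_pow, monomial_pow, monomial_mul, ← map_nsmul, nsmul_eq_mul]
  rw [mem_support_iff, hexp, coeff_sum]
  simp only [coeff_monomial]
  constructor
  · intro h
    obtain ⟨⟨k1, k2⟩, hx, hne⟩ := Finset.exists_ne_zero_of_sum_ne_zero h
    rw [Finset.HasAntidiagonal.mem_antidiagonal] at hx
    rw [ite_ne_right_iff] at hne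
    refine ⟨k1, k2, hx, hne.1.symm, fun hdvd => hne.2 ?_⟩
    rw [(CharP.cast_eq_zero_iff K p _).mpr hdvd, zero_mul]
  · rintro ⟨k1, k2, hk, rfl, hdvd⟩
    rw [Finset.sum_eq_single (k1, k2), if_pos rfl]
    · exact mul_ne_zero (fun h => hdvd ((CharP.cast_eq_zero_iff K p _).mp h))
        (mul_ne_zero (pow_ne_zero _ hu1) (pow_ne_zero _ hu2))
    · rintro ⟨j1, j2⟩ hj hne
      rw [Finset.HasAntidiagonal.mem_antidiagonal] at hj
      refine if_neg fun h => hne ?_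
      have h1 : j1 = k1 := binomial_exponent_injective hAB (hj.trans hk.symm) h
      have h2 : j2 = k2 := by simp only at hj; omega
      rw [h1, h2]
    · intro h
      exact absurd (Finset.HasAntidiagonal.mem_antidiagonal.mpr hk) h

theorem mem_lowerInterior_div_iff {m : ℕ} (a b : Fin m → ℕ) {q : ℕ} (hq : 0 < q) (k1 k2 : ℕ) :
    ((k1 : ℝ) / q, (k2 : ℝ) / q) ∈ lowerInterior a b ↔ ∀ i, k1 * a i + k2 * b i < q := by
  have hq' : (0 : ℝ) < q := by exact_mod_cast hq
  have h : ∀ i, (a i : ℝ) * (k1 / q) + b i * (k2 / q) < 1 ↔ k1 * a i + k2 * b i < q := by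
    intro i
    rw [show (a i : ℝ) * (k1 / q) + b i * (k2 / q) = (k1 * a i + k2 * b i) / q by ring,
      div_lt_one hq']
    exact_mod_cast Iff.rfl
  simp only [lowerInterior, Set.mem_ofPred_eq, h]
  exact ⟨fun h => h.2.2, fun h => ⟨by positivity, by positivity, h⟩⟩

theorem stmt_12 {K : Type*} [Field K] (p : ℕ) [Fact p.Prime] [CharP K p]
    {m : ℕ} (a b : Fin m → ℕ) (hab : a ≠ b) (hvar : ∀ i, 1 ≤ a i + b i)
    (u1 u2 : K) (hu1 : u1 ≠ 0) (hu2 : u2 ≠ 0)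
    (e : ℕ) (he : 1 ≤ e) (α : ℝ) (hα : 0 ≤ α) (k : ℕ) (hk : (k : ℝ) = (p : ℝ) ^ e * α) :
    (MvPolynomial.C u1 * ∏ i, MvPolynomial.X i ^ a i +
       MvPolynomial.C u2 * ∏ i, MvPolynomial.X i ^ b i) ^ k ∉
        frobeniusPower K (Fin m) (p ^ e) ↔
      ∃ k1 k2 : ℕ, k1 + k2 = k ∧
        ((k1 : ℝ) / (p : ℝ) ^ e, (k2 : ℝ) / (p : ℝ) ^ e) ∈ lowerInterior a b ∧
        ¬ (p ∣ Nat.choose k k1) := by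
  have hmon : ∀ (c : Fin m → ℕ) (u : K), MvPolynomial.C u * ∏ i, MvPolynomial.X i ^ c i =
      MvPolynomial.monomial (Finsupp.equivFunOnFinite.symm c) u := by
    intro c u
    rw [MvPolynomial.monomial_eq, Finsupp.prod_fintype _ _ fun i => pow_zero _]
    rfl
  have hAB : Finsupp.equivFunOnFinite.symm a ≠ Finsupp.equivFunOnFinite.symm b :=
    fun h => hab (Finsupp.equivFunOnFinite.symm.injective h)
  have hq : 0 < p ^ e := pow_pos (Fact.out : p.Prime).pos e
  have hlow := mem_lowerInterior_div_iff a b hq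
  push_cast at hlow
  simp only [hmon, not_mem_frobeniusPower_iff, mem_support_binomial_pow p hAB hu1 hu2, hlow]
  constructor
  · rintro ⟨d, ⟨k1, k2, hk12, rfl, hdvd⟩, hd⟩
    exact ⟨k1, k2, hk12, fun i => by simpa using hd i, hdvd⟩
  · rintro ⟨k1, k2, hk12, hd, hdvd⟩
    exact ⟨_, ⟨k1, k2, hk12, rfl, hdvd⟩, fun i => by simpa using hd i⟩
end

section
/- Fix a prime p. Let a, b ∈ ℕ^m with a ≠ b and a_i + b_i ≥ 1 for every i, and suppose the splitting polytope P has a unique maximal point η = (η_1, η_2) with η_1 + η_2 ≤ 1. Suppose L := sup{ N ∈ ℕ : η_1^(e) + η_2^(e) ≤ p−1 for all 1 ≤ e ≤ N } is finite. Then the set { e : 1 ≤ e ≤ L and η_1^(e) + η_2^(e) ≤ p−2 } is nonempty, so its maximum d satisfies 1 ≤ d ≤ L; moreover ⟨η_1⟩_d + ⟨η_2⟩_d + 1/p^d = ⟨η_1 + η_2⟩_L. In particular, p^d·⟨η_1+η_2⟩_L ∈ ℕ. -/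
/-- The `e`-th digit (for `e ≥ 1`) of the non-terminating base-`p` expansion of `α`. -/
noncomputable def digit (p e : ℕ) (α : ℝ) : ℝ :=
  (p : ℝ) ^ e * (trunc p e α - trunc p (e - 1) α)

/-- The integer `p ^ e * ⟨α⟩ₑ`, for `α` positive. -/
noncomputable def numer (p e : ℕ) (α : ℝ) : ℤ := ⌈(p : ℝ) ^ e * α⌉ - 1

lemma trunc_eq_numer (p e : ℕ) {α : ℝ} (hα : 0 < α) :
    trunc p e α = (numer p e α : ℝ) / (p : ℝ) ^ e := by
  simp [trunc, numer, hα.ne']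

lemma digit_zero (p e : ℕ) : digit p e 0 = 0 := by
  simp [digit, trunc]

lemma digit_succ (p e : ℕ) (hp : 0 < p) {α : ℝ} (hα : 0 < α) :
    digit p (e + 1) α = ((numer p (e + 1) α - p * numer p e α : ℤ) : ℝ) := by
  have : (p : ℝ) ≠ 0 := by positivity
  rw [digit, trunc_eq_numer p _ hα, trunc_eq_numer p _ hα, Nat.add_sub_cancel]
  push_cast
  field_simp
  ring

lemma digit_succ_le (p e : ℕ) (hp : 0 < p) {α : ℝ} (hα : 0 < α) :
    digit p (e + 1) α ≤ (p : ℝ) - 1 := by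
  have h : ⌈(p : ℝ) ^ (e + 1) * α⌉ ≤ p * ⌈(p : ℝ) ^ e * α⌉ := by
    rw [Int.ceil_le, pow_succ']
    push_cast
    rw [mul_assoc]
    exact mul_le_mul_of_nonneg_left (Int.le_ceil _) (by positivity)
  have h' : (⌈(p : ℝ) ^ (e + 1) * α⌉ : ℝ) ≤ p * ⌈(p : ℝ) ^ e * α⌉ := by exact_mod_cast h
  rw [digit_succ p e hp hα]
  simp only [numer]
  push_cast
  linarith

lemma numer_lt (p e : ℕ) (α : ℝ) : (numer p e α : ℝ) < (p : ℝ) ^ e * α := by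
  have := Int.ceil_lt_add_one ((p : ℝ) ^ e * α)
  simp only [numer]
  push_cast
  linarith

lemma le_numer_add_one (p e : ℕ) (α : ℝ) : (p : ℝ) ^ e * α ≤ (numer p e α : ℝ) + 1 := by
  have := Int.le_ceil ((p : ℝ) ^ e * α)
  simp only [numer]
  push_cast
  linarith

lemma numer_nonneg (p e : ℕ) (hp : 0 < p) {α : ℝ} (hα : 0 < α) : 0 ≤ numer p e α := by
  have : 0 < ⌈(p : ℝ) ^ e * α⌉ := Int.ceil_pos.2 (by positivity)
  simp only [numer]
  omega

lemma numer_zero (p : ℕ) {α : ℝ} (hα : 0 < α) (h1 : α ≤ 1) : numer p 0 α = 0 := by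
  have : ⌈α⌉ = 1 := by rw [Int.ceil_eq_iff]; norm_num; exact ⟨hα, h1⟩
  simp [numer, this]

/-- A carry out of place `L + 1` shifts the `L`-th truncation of the sum by exactly one unit. -/
lemma ceil_add_of_carry (p L : ℕ) (hp : 0 < p) (x y : ℝ)
    (h : (p : ℤ) * (numer p L x + numer p L y) + p ≤ numer p (L + 1) x + numer p (L + 1) y) :
    numer p L (x + y) = numer p L x + numer p L y + 1 := by
  have hp' : (0 : ℝ) < p := by exact_mod_cast hp
  have h' : (p : ℝ) * (numer p L x + numer p L y) + p
      ≤ numer p (L + 1) x + numer p (L + 1) y := by exact_mod_cast h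
  have hx := numer_lt p (L + 1) x
  have hy := numer_lt p (L + 1) y
  have hx' := le_numer_add_one p L x
  have hy' := le_numer_add_one p L y
  have key : (numer p L x + numer p L y + 1 : ℝ) < (p : ℝ) ^ L * (x + y) := by
    rw [pow_succ'] at hx hy
    refine lt_of_mul_lt_mul_left ?_ hp'.le
    linarith
  have hc : ⌈(p : ℝ) ^ L * (x + y)⌉ = numer p L x + numer p L y + 2 := by
    rw [Int.ceil_eq_iff]
    push_cast
    constructor <;> linarith
  rw [numer, hc]
  ring

/-- Digit sums equal to `p - 1` at places `d + 1, …, d + k` keep `(S e + 1) / p ^ e` constant. -/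
lemma run_of_full_digits (p : ℤ) (S : ℕ → ℤ) (d k : ℕ)
    (h : ∀ e, d ≤ e → e < d + k → S (e + 1) - p * S e = p - 1) :
    S (d + k) + 1 = p ^ k * (S d + 1) := by
  induction k with
  | zero => simp
  | succ k ih =>
    have h1 := ih fun e he hk => h e he (by omega)
    have h2 := h (d + k) (by omega) (by omega)
    rw [← add_assoc, pow_succ']
    linear_combination h2 + p * h1

theorem stmt_13 (p : ℕ) (hp : p.Prime)
    {m : ℕ} (a b : Fin m → ℕ) (hab : a ≠ b) (hvar : ∀ i, 1 ≤ a i + b i)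
    (η : ℝ × ℝ) (hη : isMaxPoint a b η) (huniq : ∀ s, isMaxPoint a b s → s = η)
    (hsum : η.1 + η.2 ≤ 1) (L : ℕ)
    (hL1 : ∀ e : ℕ, 1 ≤ e → e ≤ L → digit p e η.1 + digit p e η.2 ≤ (p : ℝ) - 1)
    (hL2 : (p : ℝ) ≤ digit p (L + 1) η.1 + digit p (L + 1) η.2) :
    {e : ℕ | 1 ≤ e ∧ e ≤ L ∧ digit p e η.1 + digit p e η.2 ≤ (p : ℝ) - 2}.Nonempty ∧
    ∀ d : ℕ, d = sSup {e : ℕ | 1 ≤ e ∧ e ≤ L ∧ digit p e η.1 + digit p e η.2 ≤ (p : ℝ) - 2} →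
      1 ≤ d ∧ d ≤ L ∧
      trunc p d η.1 + trunc p d η.2 + 1 / (p : ℝ) ^ d = trunc p L (η.1 + η.2) ∧
      ∃ n : ℕ, (p : ℝ) ^ d * trunc p L (η.1 + η.2) = n := by
  have hp0 : 0 < p := hp.pos
  have hpR : (0 : ℝ) < p := by exact_mod_cast hp0
  obtain ⟨x, y⟩ := η
  obtain ⟨⟨hx0, hy0, -⟩, -⟩ := hη
  clear huniq
  dsimp only at *
  have hx : 0 < x := by
    rcases hx0.eq_or_lt with rfl | h
    · rw [digit_zero] at hL2
      rcases hy0.eq_or_lt with rfl | h'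
      · rw [digit_zero] at hL2; linarith
      · have := digit_succ_le p L hp0 h'; linarith
    · exact h
  have hy : 0 < y := by
    rcases hy0.eq_or_lt with rfl | h
    · rw [digit_zero] at hL2
      have := digit_succ_le p L hp0 hx; linarith
    · exact h
  obtain ⟨S, hS⟩ : ∃ S : ℕ → ℤ, ∀ e, S e = numer p e x + numer p e y := ⟨_, fun _ => rfl⟩
  have hdig : ∀ e, digit p (e + 1) x + digit p (e + 1) y = ((S (e + 1) - p * S e : ℤ) : ℝ) := by
    intro e
    rw [digit_succ p e hp0 hx, digit_succ p e hp0 hy, hS, hS]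
    push_cast
    ring
  have hcarry : (p : ℤ) ≤ S (L + 1) - p * S L := by
    rw [hdig] at hL2
    exact_mod_cast hL2
  have hsumL : numer p L (x + y) = S L + 1 := by
    rw [hS]
    apply ceil_add_of_carry p L hp0
    rw [← hS, ← hS]
    linarith
  have hlt : S L + 1 < (p : ℤ) ^ L := by
    have h1 := numer_lt p L (x + y)
    rw [hsumL] at h1
    have h2 : (p : ℝ) ^ L * (x + y) ≤ (p : ℝ) ^ L := mul_le_of_le_one_right (by positivity) hsum
    exact_mod_cast h1.trans_le h2
  set T := {e : ℕ | 1 ≤ e ∧ e ≤ L ∧ digit p e x + digit p e y ≤ (p : ℝ) - 2} with hT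
  -- Digit sums are integers, so outside `T` the bound `≤ p - 1` is an equality.
  have hfull : ∀ e, e < L → e + 1 ∉ T → S (e + 1) - p * S e = p - 1 := by
    intro e he hn
    have h1 := hL1 (e + 1) (by omega) (by omega)
    have h2 : ¬ digit p (e + 1) x + digit p (e + 1) y ≤ (p : ℝ) - 2 :=
      fun h => hn ⟨by omega, by omega, h⟩
    rw [hdig] at h1 h2
    have h1' : S (e + 1) - p * S e ≤ (p : ℤ) - 1 := by exact_mod_cast h1
    have h2' : ¬ S (e + 1) - p * S e ≤ (p : ℤ) - 2 := fun h => h2 (by exact_mod_cast h)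
    omega
  have hne : T.Nonempty := by
    by_contra hemp
    rw [Set.not_nonempty_iff_eq_empty] at hemp
    have h := run_of_full_digits p S 0 L fun e _ he => hfull e (by omega) (by simp [hemp])
    have h0 : S 0 = 0 := by
      rw [hS, numer_zero p hx (by linarith), numer_zero p hy (by linarith), add_zero]
    rw [h0, zero_add, zero_add, mul_one] at h
    omega
  have hbdd : BddAbove T := ⟨L, fun e he => he.2.1⟩
  refine ⟨hne, ?_⟩
  rintro d rfl
  have hmem := Nat.sSup_mem hne hbdd
  have hmax : ∀ e ∈ T, e ≤ sSup T := fun e he => le_csSup hbdd he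
  generalize sSup T = d at hmem hmax
  obtain ⟨hd1, hdL, -⟩ := hmem
  obtain ⟨k, rfl⟩ := Nat.exists_eq_add_of_le hdL
  have hrun := run_of_full_digits p S d k fun e hde he =>
    hfull e he fun hmem => by have := hmax _ hmem; omega
  have htr : trunc p (d + k) (x + y) = ((S d : ℝ) + 1) / (p : ℝ) ^ d := by
    rw [trunc_eq_numer p _ (by linarith), hsumL, hrun]
    push_cast
    rw [pow_add]
    field_simp
  refine ⟨hd1, hdL, ?_, (S d + 1).toNat, ?_⟩
  · rw [htr, trunc_eq_numer p _ hx, trunc_eq_numer p _ hy, hS]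
    push_cast
    ring
  · have hnn : 0 ≤ S d + 1 := by
      have h1 := numer_nonneg p d hp0 hx
      have h2 := numer_nonneg p d hp0 hy
      rw [hS]
      omega
    have hcast : (((S d + 1).toNat : ℕ) : ℝ) = ((S d + 1 : ℤ) : ℝ) := by
      exact_mod_cast Int.toNat_of_nonneg hnn
    rw [htr, hcast]
    push_cast
    field_simp
end
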